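/- Let λ ≥ 2, let ⟨g_i⟩ be a geodesic ray or geodesic segment in F₂, let s ∈ SP, and suppose θ ∈ cl(Exp_λ(g₁) ∩ Q_s) (closure taken in ℝ², with θ ∈ S¹). Define s_i = Σ^{g_i}(s). Then ρ_λ(g_i)θ ∈ cl(Q_{s_i}) for all i. -/

import Mathlib

noncomputable section

abbrev F2 := FreeGroup Bool

def gh : F2 := FreeGroup.of true
def gv : F2 := FreeGroup.of false

def hmat (l : ℝ) : Matrix.SpecialLinearGroup (Fin 2) ℝ :=
  ⟨!![1, l; 0, 1], by norm_num [Matrix.det_fin_two_of]⟩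

def vmat (l : ℝ) : Matrix.SpecialLinearGroup (Fin 2) ℝ :=
  ⟨!![1, 0; l, 1], by norm_num [Matrix.det_fin_two_of]⟩

def rho (l : ℝ) : F2 →* Matrix.SpecialLinearGroup (Fin 2) ℝ :=
  FreeGroup.lift fun b => if b then hmat l else vmat l

def act (l : ℝ) (g : F2) (x : Fin 2 → ℝ) : Fin 2 → ℝ :=
  (rho l g).val.mulVec x

def nrm (x : Fin 2 → ℝ) : ℝ := Real.sqrt (x 0 ^ 2 + x 1 ^ 2)

def Circ : Set (Fin 2 → ℝ) := {x | nrm x = 1}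

def gens : Set F2 := {gh, gv, gh⁻¹, gv⁻¹}

def ShrinkSet (l : ℝ) (g : F2) : Set (Fin 2 → ℝ) :=
  {x | x ∈ Circ ∧ nrm (act l g x) < 1}

def ExpSet (l : ℝ) (g : F2) : Set (Fin 2 → ℝ) :=
  {x | x ∈ Circ ∧ 1 < nrm (act l g x)}

def IsGeodesicRay (g : ℕ → F2) : Prop :=
  g 0 = 1 ∧ (∀ n, g (n + 1) * (g n)⁻¹ ∈ gens) ∧ ∀ n, g (n + 2) * (g n)⁻¹ ≠ 1

def IsGeodesicSegment (g : ℕ → F2) (N : ℕ) : Prop :=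
  g 0 = 1 ∧ (∀ n, n + 1 ≤ N → g (n + 1) * (g n)⁻¹ ∈ gens) ∧
    ∀ n, n + 2 ≤ N → g (n + 2) * (g n)⁻¹ ≠ 1

def IsShrinkingSeq (l : ℝ) (g : ℕ → F2) (θ : Fin 2 → ℝ) : Prop :=
  ∀ ε : ℝ, 0 < ε → ∃ i : ℕ, nrm (act l (g i) θ) < ε

def Shrinkable (l : ℝ) (θ : Fin 2 → ℝ) : Prop :=
  ∀ ε : ℝ, 0 < ε → ∃ g : F2, nrm (act l g θ) < ε

def Renormalizable (l : ℝ) (θ : Fin 2 → ℝ) : Prop :=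
  Shrinkable l θ ∧ ∀ k : F2, ∀ c : ℝ, act l (k * (gh * gv⁻¹) * k⁻¹) θ ≠ c • θ

abbrev SP := Bool × Bool

def Quad (s : SP) : Set (Fin 2 → ℝ) :=
  {x | (if s.1 then 0 < x 0 else x 0 < 0) ∧ (if s.2 then 0 < x 1 else x 1 < 0)}

def letterSigma : Bool × Bool → SP → SP
  | (true, true), s => (s.2, s.2)
  | (false, true), s => (s.1, s.1)
  | (true, false), s => (!s.2, s.2)
  | (false, false), s => (s.1, !s.1)

def SigmaAct (g : F2) : SP → SP :=
  (FreeGroup.toWord g).foldr (fun w acc => letterSigma w ∘ acc) id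

def gammaAut : F2 →* F2 := FreeGroup.lift fun b => if b then gv⁻¹ else gh⁻¹

def rPerm (s : SP) : SP := (!s.2, s.1)

def rPermInv (s : SP) : SP := (s.2, !s.1)

def shiftRay (g : ℕ → F2) : ℕ → F2 := fun n => g (n + 1) * (g 1)⁻¹

def TailEquiv (g g' : ℕ → F2) : Prop :=
  ∃ m n : ℕ, shiftRay^[m] g = shiftRay^[n] g'

def seqPow (a : F2) : ℕ → F2 := fun n => a ^ n

def seqPer (a b : F2) : ℕ → F2 := fun n =>
  if n % 2 = 0 then (b * a) ^ (n / 2) else a * (b * a) ^ (n / 2)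

def Cond1 (g : ℕ → F2) : Prop :=
  ¬ TailEquiv g (seqPow gh) ∧ ¬ TailEquiv g (seqPow gh⁻¹) ∧
    ¬ TailEquiv g (seqPow gv) ∧ ¬ TailEquiv g (seqPow gv⁻¹)

def Cond2 (g : ℕ → F2) : Prop :=
  ¬ TailEquiv g (seqPer gh gv⁻¹) ∧ ¬ TailEquiv g (seqPer gh⁻¹ gv)

def adjSum {V : Type} (G : SimpleGraph V) (f : V → ℝ) (v : V) : ℝ :=
  ∑ᶠ w ∈ G.neighborSet v, f w

def BoundedValance {V : Type} (G : SimpleGraph V) : Prop :=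
  ∃ D : ℕ, ∀ v, (G.neighborSet v).Finite ∧ (G.neighborSet v).ncard ≤ D

def BipartWith {V : Type} (G : SimpleGraph V) (A : Set V) : Prop :=
  ∀ v w, G.Adj v w → (v ∈ A ↔ w ∉ A)

def Hop {V : Type} (G : SimpleGraph V) (A : Set V) (k : ℤ) (f : V → ℝ) : V → ℝ :=
  fun v => f v + (k : ℝ) * Set.indicator A (adjSum G f) v

def Vop {V : Type} (G : SimpleGraph V) (A : Set V) (k : ℤ) (f : V → ℝ) : V → ℝ :=
  fun v => f v + (k : ℝ) * Set.indicator Aᶜ (adjSum G f) v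

def QuadV {V : Type} (A : Set V) (s : SP) : Set (V → ℝ) :=
  {f | (∀ v ∈ A, f v = 0 ∨ (if s.1 then 0 < f v else f v < 0)) ∧
       ∀ v, v ∉ A → f v = 0 ∨ (if s.2 then 0 < f v else f v < 0)}

def valance {V : Type} (G : SimpleGraph V) (v : V) : ℕ := (G.neighborSet v).ncard

def evec {V : Type} (v : V) : V → ℝ := Set.indicator {v} 1

def InSpoke {V : Type} (G : SimpleGraph V) (x : V) : Prop :=
  ∃ k : ℕ, 2 ≤ k ∧ ∃ c : ℕ → V,
    (∀ i j, 1 ≤ i → i ≤ k → 1 ≤ j → j ≤ k → c i = c j → i = j) ∧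
    valance G (c 1) = 1 ∧
    (∀ i, 2 ≤ i → i ≤ k - 1 →
      valance G (c i) = 2 ∧ G.Adj (c i) (c (i - 1)) ∧ G.Adj (c i) (c (i + 1))) ∧
    ∃ i, 1 ≤ i ∧ i ≤ k ∧ x = c i


def sg (b : Bool) : ℝ := if b then 1 else -1

def lact (l : ℝ) (w : Bool × Bool) (y : Fin 2 → ℝ) : Fin 2 → ℝ :=
  if w.1 then ![y 0 + sg w.2 * l * y 1, y 1] else ![y 0, y 1 + sg w.2 * l * y 0]

def PP (l : ℝ) (w : Bool × Bool) (s : SP) (y : Fin 2 → ℝ) : Prop :=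
  0 ≤ sg s.1 * y 0 ∧ 0 ≤ sg s.2 * y 1 ∧
    (if w.1 then 0 ≤ sg s.2 * (2 * sg w.2 * y 0 + l * y 1)
      else 0 ≤ sg s.1 * (2 * sg w.2 * y 1 + l * y 0))

lemma act_mk (l : ℝ) (w : Bool × Bool) (y : Fin 2 → ℝ) :
    act l (FreeGroup.mk [w]) y = lact l w y := by
  obtain ⟨a, b⟩ := w
  have hm : (rho l (FreeGroup.mk [(a, b)])).val =
      if a then !![1, sg b * l; 0, 1] else !![1, 0; sg b * l, 1] := by
    have h1 : rho l (FreeGroup.mk [(a, b)]) = bif b then (if a then hmat l else vmat l)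
        else (if a then hmat l else vmat l)⁻¹ := by
      simp [rho]
    rw [h1]
    cases a <;> cases b
    · change ((vmat l)⁻¹).val = _
      rw [Matrix.SpecialLinearGroup.coe_inv]
      simp [vmat, sg, Matrix.adjugate_fin_two]
    · change (vmat l).val = _
      simp [vmat, sg]
    · change ((hmat l)⁻¹).val = _
      rw [Matrix.SpecialLinearGroup.coe_inv]
      simp [hmat, sg, Matrix.adjugate_fin_two]
    · change (hmat l).val = _
      simp [hmat, sg]
  unfold act
  rw [hm]
  cases a <;> ext i <;> fin_cases i <;>
    simp [lact, Matrix.mulVec, dotProduct, Fin.sum_univ_two]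
  ring

lemma act_mul (l : ℝ) (a b : F2) (y : Fin 2 → ℝ) :
    act l (a * b) y = act l a (act l b y) := by
  simp only [act, map_mul, Matrix.SpecialLinearGroup.coe_mul, Matrix.mulVec_mulVec]

lemma mem_cl (s : SP) (y : Fin 2 → ℝ) (h0 : 0 ≤ sg s.1 * y 0) (h1 : 0 ≤ sg s.2 * y 1) :
    y ∈ closure (Quad s) := by
  have hQ : Quad s = Set.pi Set.univ
      (![if s.1 then Set.Ioi 0 else Set.Iio 0, if s.2 then Set.Ioi 0 else Set.Iio 0] :
        Fin 2 → Set ℝ) := by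
    ext z
    obtain ⟨a, b⟩ := s
    cases a <;> cases b <;> simp [Quad, Set.mem_pi, Fin.forall_fin_two]
  rw [hQ, closure_pi_set]
  obtain ⟨a, b⟩ := s
  cases a <;> cases b <;> simp [Set.mem_pi, Fin.forall_fin_two, sg] at * <;>
    exact ⟨h0, h1⟩

lemma PP_mem (l : ℝ) (hl : 2 ≤ l) (w : Bool × Bool) (s : SP) (y : Fin 2 → ℝ) (h : PP l w s y) :
    0 ≤ sg (letterSigma w s).1 * lact l w y 0 ∧ 0 ≤ sg (letterSigma w s).2 * lact l w y 1 := by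
  obtain ⟨a, e⟩ := w
  obtain ⟨p, q⟩ := s
  obtain ⟨h0, h1, h2⟩ := h
  cases a <;> cases e <;> cases p <;> cases q <;>
    simp [letterSigma, lact, sg] at * <;> constructor <;> nlinarith

lemma PP_step (l : ℝ) (hl : 2 ≤ l) (w w' : Bool × Bool) (s : SP) (y : Fin 2 → ℝ)
    (h : PP l w s y) (hw : ¬ (w'.1 = w.1 ∧ w'.2 = !w.2)) :
    PP l w' (letterSigma w s) (lact l w y) := by
  refine ⟨(PP_mem l hl w s y h).1, (PP_mem l hl w s y h).2, ?_⟩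
  obtain ⟨a, e⟩ := w
  obtain ⟨a', e'⟩ := w'
  obtain ⟨p, q⟩ := s
  obtain ⟨h0, h1, h2⟩ := h
  have hl0 : 0 ≤ l := by linarith
  have hl2 : 0 ≤ l * l - 4 := by nlinarith
  have m0 := mul_nonneg hl2 h0
  have m1 := mul_nonneg hl2 h1
  cases a <;> cases e <;> cases a' <;> cases e' <;>
    first
    | exact absurd ⟨rfl, rfl⟩ hw
    | (simp only [if_true, if_false, Bool.false_eq_true] at h2
       have m2 := mul_nonneg hl0 h2
       cases p <;> cases q <;>
         simp only [letterSigma, lact, sg, if_true, if_false, Bool.false_eq_true, Bool.not_true,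
           Bool.not_false, Matrix.cons_val_zero, Matrix.cons_val_one] at h0 h1 h2 m0 m1 m2 ⊢ <;>
         nlinarith)

lemma PP_closed (l : ℝ) (w : Bool × Bool) (s : SP) : IsClosed {y | PP l w s y} := by
  obtain ⟨a, e⟩ := w
  have c0 : Continuous (fun y : Fin 2 → ℝ => sg s.1 * y 0) := by fun_prop
  have c1 : Continuous (fun y : Fin 2 → ℝ => sg s.2 * y 1) := by fun_prop
  have c2 : Continuous (fun y : Fin 2 → ℝ => sg s.2 * (2 * sg e * y 0 + l * y 1)) := by fun_prop
  have c3 : Continuous (fun y : Fin 2 → ℝ => sg s.1 * (2 * sg e * y 1 + l * y 0)) := by fun_prop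
  cases a
  · exact (isClosed_le continuous_const c0).inter
      ((isClosed_le continuous_const c1).inter (isClosed_le continuous_const c3))
  · exact (isClosed_le continuous_const c0).inter
      ((isClosed_le continuous_const c1).inter (isClosed_le continuous_const c2))

lemma PP_init (l : ℝ) (hl : 2 ≤ l) (w : Bool × Bool) (s : SP) (y : Fin 2 → ℝ)
    (h : y ∈ ExpSet l (FreeGroup.mk [w]) ∩ Quad s) : PP l w s y := by
  obtain ⟨⟨hc, he⟩, hq⟩ := h
  rw [act_mk] at he
  have hc' : nrm y = 1 := hc
  unfold nrm at hc' he
  rw [Real.sqrt_eq_one] at hc'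
  rw [Real.lt_sqrt (by norm_num)] at he
  obtain ⟨hq0, hq1⟩ := hq
  obtain ⟨a, e⟩ := w
  obtain ⟨p, q⟩ := s
  have hl0 : 0 < l := by linarith
  have key : ∀ c d : ℝ, 0 < l * (c * d) → 0 < c * d := fun c d h => (mul_pos_iff_of_pos_left hl0).1 h
  refine ⟨?_, ?_, ?_⟩
  · cases p <;> simp [sg] at * <;> linarith
  · cases q <;> simp [sg] at * <;> linarith
  · have h1 : a = true → 0 < y 1 * (2 * sg e * y 0 + l * y 1) := by
      rintro rfl
      apply key
      cases e <;> simp [lact, sg] at * <;> nlinarith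
    have h2 : a = false → 0 < y 0 * (2 * sg e * y 1 + l * y 0) := by
      rintro rfl
      apply key
      cases e <;> simp [lact, sg] at * <;> nlinarith
    cases a
    · have h2 := h2 rfl
      cases p
      · simp [sg] at hq0 h2 ⊢
        linarith [neg_of_mul_pos_right h2 hq0.le]
      · simp [sg] at hq0 h2 ⊢
        exact (pos_of_mul_pos_right h2 hq0.le).le
    · have h1 := h1 rfl
      cases q
      · simp [sg] at hq1 h1 ⊢
        linarith [neg_of_mul_pos_right h1 hq1.le]
      · simp [sg] at hq1 h1 ⊢
        exact (pos_of_mul_pos_right h1 hq1.le).le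

lemma gens_mk (g : F2) (h : g ∈ gens) : ∃ w : Bool × Bool, g = FreeGroup.mk [w] := by
  rcases h with h | h | h | h
  · exact ⟨(true, true), h⟩
  · exact ⟨(false, true), h⟩
  · exact ⟨(true, false), h⟩
  · exact ⟨(false, false), h⟩

lemma seg_main (l : ℝ) (hl : 2 ≤ l) (s : SP) (x : Fin 2 → ℝ) (g : ℕ → F2) (N : ℕ)
    (hg : IsGeodesicSegment g N) (hx : x ∈ closure (ExpSet l (g 1) ∩ Quad s)) (n : ℕ) :
    n + 1 ≤ N → ∃ w : Bool × Bool, g (n + 1) = FreeGroup.mk [w] * g n ∧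
      (g (n + 1)).toWord = w :: (g n).toWord ∧ PP l w (SigmaAct (g n) s) (act l (g n) x) := by
  obtain ⟨hg0, hg1, hg2⟩ := hg
  induction n with
  | zero =>
    intro h
    obtain ⟨w, hw⟩ := gens_mk _ (hg1 0 h)
    have e : g 1 = FreeGroup.mk [w] := by simpa [hg0] using hw
    refine ⟨w, by simpa [hg0] using e, by simp [hg0, e], ?_⟩
    rw [e] at hx
    have : PP l w s x := closure_minimal (fun y hy => PP_init l hl w s y hy) (PP_closed l w s) hx
    simpa [hg0, SigmaAct, act] using this
  | succ n ih =>
    intro h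
    obtain ⟨w, hw1, hw2, hw3⟩ := ih (by omega)
    obtain ⟨w', hw'⟩ := gens_mk _ (hg1 (n + 1) h)
    have e : g (n + 1 + 1) = FreeGroup.mk [w'] * g (n + 1) := by rw [← hw']; group
    have hne : ¬ (w'.1 = w.1 ∧ w'.2 = !w.2) := by
      rintro ⟨ha, hb⟩
      apply hg2 n h
      have : FreeGroup.mk [w'] * FreeGroup.mk [w] = 1 := by
        obtain ⟨a, b⟩ := w
        obtain ⟨a', b'⟩ := w'
        simp only at ha hb
        subst ha hb
        have : (FreeGroup.mk [(a', !b)] : F2) = (FreeGroup.mk [(a', b)])⁻¹ := by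
          simp [FreeGroup.inv_mk, FreeGroup.invRev]
        rw [this, inv_mul_cancel]
      change g (n + 1 + 1) * (g n)⁻¹ = 1
      rw [e, hw1, ← mul_assoc, this]; simp
    refine ⟨w', e, ?_, ?_⟩
    · rw [e, FreeGroup.toWord_mul, FreeGroup.toWord_mk]
      have : FreeGroup.reduce [w'] ++ (g (n+1)).toWord = w' :: (g (n+1)).toWord := by simp
      rw [this, FreeGroup.reduce.cons, FreeGroup.reduce_toWord, hw2]
      simp only [hne, if_false]
    · have h1 : SigmaAct (g (n + 1)) s = letterSigma w (SigmaAct (g n) s) := by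
        simp [SigmaAct, hw2]
      have h2 : act l (g (n + 1)) x = lact l w (act l (g n) x) := by
        rw [hw1, act_mul, act_mk]
      rw [h1, h2]
      exact PP_step l hl w w' _ _ hw3 hne

lemma seg_final (l : ℝ) (hl : 2 ≤ l) (s : SP) (x : Fin 2 → ℝ) (g : ℕ → F2) (N : ℕ)
    (hg : IsGeodesicSegment g N) (hx : x ∈ closure (ExpSet l (g 1) ∩ Quad s)) (i : ℕ)
    (hi : i ≤ N) : act l (g i) x ∈ closure (Quad (SigmaAct (g i) s)) := by
  cases i with
  | zero =>
    have := closure_mono Set.inter_subset_right hx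
    simpa [hg.1, SigmaAct, act] using this
  | succ n =>
    obtain ⟨w, hw1, hw2, hw3⟩ := seg_main l hl s x g N hg hx n hi
    have h1 : SigmaAct (g (n + 1)) s = letterSigma w (SigmaAct (g n) s) := by
      simp [SigmaAct, hw2]
    have h2 : act l (g (n + 1)) x = lact l w (act l (g n) x) := by
      rw [hw1, act_mul, act_mk]
    rw [h1, h2]
    have := PP_mem l hl w _ _ hw3
    exact mem_cl _ _ this.1 this.2

theorem stmt9 (l : ℝ) (hl : 2 ≤ l) (s : SP) (x : Fin 2 → ℝ) (hx : x ∈ Circ) :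
    (∀ g : ℕ → F2, IsGeodesicRay g → x ∈ closure (ExpSet l (g 1) ∩ Quad s) →
      ∀ i : ℕ, act l (g i) x ∈ closure (Quad (SigmaAct (g i) s))) ∧
    (∀ g : ℕ → F2, ∀ N : ℕ, 1 ≤ N → IsGeodesicSegment g N →
      x ∈ closure (ExpSet l (g 1) ∩ Quad s) →
      ∀ i : ℕ, i ≤ N → act l (g i) x ∈ closure (Quad (SigmaAct (g i) s))) := by
  refine ⟨fun g hg h i => ?_, fun g N _ hg h i hi => seg_final l hl s x g N hg h i hi⟩
  exact seg_final l hl s x g i ⟨hg.1, fun n _ => hg.2.1 n, fun n _ => hg.2.2 n⟩ h i le_rfl
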